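/- arXiv:1805.06778 — 2 statements merged into one kernel-verified Lean document; each statement's English description precedes it below -/
import Mathlib

section
/- Let X be a real Banach space with a Schauder basis (e_n). Then (e_n) satisfies ‖x − G_m(x)‖ ≤ σ̃^R_m(x) for all x ∈ X, all m ∈ ℕ, and every greedy ordering (i.e., it is 1-reverse partially greedy) if and only if for every x ∈ X, all indices j > k with j, k ∉ supp(x), and all real s, t with |s| = |t| ≥ sup_i |e_i^*(x)|, one has max(‖x‖, ‖x + s·e_j‖) ≤ ‖x + t·e_k‖. -/
open Filter Topology

/-- A Schauder basis of a real normed space `X`, given by basis vectors `e n` together with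
biorthogonal (coordinate) functionals `f n`, such that every `x` is the limit of its
partial-sum expansion `∑_{n < N} f n x • e n`. -/
structure SchauderBasisSys (X : Type*) [NormedAddCommGroup X] [NormedSpace ℝ X] where
  e : ℕ → X
  f : ℕ → X →L[ℝ] ℝ
  biorth : ∀ m n : ℕ, f m (e n) = if m = n then (1 : ℝ) else 0
  expansion : ∀ x : X,
    Filter.Tendsto (fun N : ℕ => ∑ n ∈ Finset.range N, f n x • e n) Filter.atTop (nhds x)

namespace SchauderBasisSys

variable {X : Type*} [NormedAddCommGroup X] [NormedSpace ℝ X]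

/-- The coordinate projection onto a finite set `A` of indices: `P_A x = ∑_{i ∈ A} e_i^*(x) e_i`. -/
noncomputable def P (S : SchauderBasisSys X) (A : Finset ℕ) (x : X) : X :=
  ∑ i ∈ A, S.f i x • S.e i

/-- The indicator vector `1_A = ∑_{i ∈ A} e_i`. -/
noncomputable def ind (S : SchauderBasisSys X) (A : Finset ℕ) : X :=
  ∑ i ∈ A, S.e i

/-- A greedy ordering for `x`: an injection `ρ : ℕ → ℕ` whose range contains the support of `x`
and which rearranges the coordinates of `x` in nonincreasing order of absolute value. -/
def IsGreedyOrdering (S : SchauderBasisSys X) (x : X) (ρ : ℕ → ℕ) : Prop :=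
  Function.Injective ρ ∧ (∀ n : ℕ, S.f n x ≠ 0 → n ∈ Set.range ρ) ∧
    ∀ j k : ℕ, j ≤ k → |S.f (ρ k) x| ≤ |S.f (ρ j) x|

/-- The greedy set `Λ_m(x) = {ρ(0), …, ρ(m-1)}` associated to a greedy ordering `ρ`. -/
def Lam (ρ : ℕ → ℕ) (m : ℕ) : Finset ℕ := (Finset.range m).image ρ

/-- The `m`-th greedy approximation `G_m(x) = ∑_{j < m} e_{ρ(j)}^*(x) e_{ρ(j)}`. -/
noncomputable def G (S : SchauderBasisSys X) (x : X) (ρ : ℕ → ℕ) (m : ℕ) : X :=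
  ∑ j ∈ Finset.range m, S.f (ρ j) x • S.e (ρ j)

/-- Quasi-greedy: `‖G_m(x)‖ ≤ K ‖x‖` uniformly. -/
def QuasiGreedy (S : SchauderBasisSys X) : Prop :=
  ∃ K : ℝ, ∀ (x : X) (ρ : ℕ → ℕ) (m : ℕ),
    S.IsGreedyOrdering x ρ → ‖S.G x ρ m‖ ≤ K * ‖x‖

/-- Conservative: `‖1_A‖ ≤ Γ ‖1_B‖` whenever `|A| ≤ |B|` and `max A < min B`. -/
def Conservative (S : SchauderBasisSys X) : Prop :=
  ∃ Γ : ℝ, ∀ A B : Finset ℕ, A.card ≤ B.card →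
    (∀ i ∈ A, ∀ j ∈ B, i < j) → ‖S.ind A‖ ≤ Γ * ‖S.ind B‖

/-- Reverse conservative: `‖1_A‖ ≤ Γ ‖1_B‖` whenever `|A| ≤ |B|` and `max B < min A`. -/
def ReverseConservative (S : SchauderBasisSys X) : Prop :=
  ∃ Γ : ℝ, ∀ A B : Finset ℕ, A.card ≤ B.card →
    (∀ i ∈ A, ∀ j ∈ B, j < i) → ‖S.ind A‖ ≤ Γ * ‖S.ind B‖

/-- Partially greedy: `‖x - G_m(x)‖ ≤ C ‖∑_{n ≥ m} e_n^*(x) e_n‖ = C ‖x - P_{[0,m)}(x)‖`. -/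
def PartiallyGreedy (S : SchauderBasisSys X) : Prop :=
  ∃ C : ℝ, ∀ (x : X) (ρ : ℕ → ℕ) (m : ℕ), S.IsGreedyOrdering x ρ →
    ‖x - S.G x ρ m‖ ≤ C * ‖x - S.P (Finset.range m) x‖

/-- Almost greedy: `‖x - G_m(x)‖ ≤ C inf{‖x - P_A(x)‖ : |A| ≤ m}`. -/
def AlmostGreedy (S : SchauderBasisSys X) : Prop :=
  ∃ C : ℝ, ∀ (x : X) (ρ : ℕ → ℕ) (m : ℕ) (A : Finset ℕ), S.IsGreedyOrdering x ρ →
    A.card ≤ m → ‖x - S.G x ρ m‖ ≤ C * ‖x - S.P A x‖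

end SchauderBasisSys

open SchauderBasisSys

/-!
Both properties are equivalent to a statement about erasing single coordinates: if the `k`-th
coordinate of `x` is one of the largest and `k < j`, then erasing it leaves a vector of norm at most
that of the vector left by erasing the `j`-th coordinate.

The reverse partially greedy inequality with `m = 1` and `A = {j}` is this statement for those `x`
that have a greedy ordering starting at `k`. Such an ordering exists if `x` has finite support, and
the partial sums of the expansion take care of the other `x`. Conversely, once a largest coordinate
has been erased, the rest of the greedy ordering of `x` is a greedy ordering of the erased vector,
so the greedy inequality follows by induction on `m`, each greedy step being compared with the
erasure of one element of `A`.

The second property is the erasure statement for `x + s e_j + t e_k`, but only for `|s| ∈ {0, |t|}`;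
the convexity of `r ↦ ‖x + r e_j‖` extends it to `|s| ≤ |t|`.
-/

theorem exists_perm_antitone_comp {α : Type*} [LinearOrder α] {a : ℕ → α}
    (ha : ∀ᶠ i in atTop, ∀ j, a i ≤ a j) : ∃ τ : Equiv.Perm ℕ, Antitone (a ∘ τ) := by
  obtain ⟨N, hN⟩ := eventually_atTop.mp ha
  let b : Fin N → αᵒᵈ := fun i => OrderDual.toDual (a i)
  let τ : Equiv.Perm ℕ := (Tuple.sort b).extendDomain Fin.equivSubtype
  have τ_of_lt {i : ℕ} (hi : i < N) : τ i = Tuple.sort b ⟨i, hi⟩ :=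
    Equiv.Perm.extendDomain_apply_subtype _ Fin.equivSubtype hi
  have τ_of_ge {i : ℕ} (hi : N ≤ i) : τ i = i :=
    Equiv.Perm.extendDomain_apply_not_subtype _ Fin.equivSubtype hi.not_gt
  refine ⟨τ, fun i j hij => ?_⟩
  rcases lt_or_ge j N with hj | hj
  · rw [Function.comp_apply, Function.comp_apply, τ_of_lt (hij.trans_lt hj), τ_of_lt hj]
    exact Tuple.monotone_sort b (Fin.mk_le_mk.mpr hij)
  · rw [Function.comp_apply, τ_of_ge hj]
    exact hN j hj _

theorem exists_perm_antitone_comp_bot_eq {ι α : Type*} [Preorder ι] [OrderBot ι]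
    [PartialOrder α] {a : ι → α} {τ : Equiv.Perm ι} (hτ : Antitone (a ∘ τ)) {k : ι}
    (hk : ∀ i, a i ≤ a k) : ∃ ρ : Equiv.Perm ι, ρ ⊥ = k ∧ Antitone (a ∘ ρ) := by
  classical
  have h_bot : (a ∘ τ) ⊥ = (a ∘ τ) (τ.symm k) :=
    le_antisymm (by simpa using hk (τ ⊥)) (hτ bot_le)
  refine ⟨(Equiv.swap ⊥ (τ.symm k)).trans τ, by simp, ?_⟩
  convert hτ using 1
  exact funext (Equiv.apply_swap_eq_self h_bot)

theorem norm_add_smul_le_max_of_abs_le {E : Type*} [SeminormedAddCommGroup E] [NormedSpace ℝ E]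
    (x v : E) {s t : ℝ} (hst : |s| ≤ t) : ‖x + s • v‖ ≤ max ‖x + (-t) • v‖ ‖x + t • v‖ :=
  (((convexOn_univ_norm (E := E)).translate_right x).comp_linearMap
    (LinearMap.toSpanSingleton ℝ E v)).le_max_of_mem_Icc trivial trivial (abs_le.mp hst)

namespace SchauderBasisSys

variable {X : Type*} [NormedAddCommGroup X] [NormedSpace ℝ X] {S : SchauderBasisSys X}
  {x : X} {ρ : ℕ → ℕ} {j k : ℕ} {s t : ℝ}

/-- `1`-reverse partially greedy. As `σ̃^R_m` is an infimum, `‖x - G_m(x)‖ ≤ σ̃^R_m(x)` is expressed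
by comparing with every finite set `A` that the infimum ranges over. -/
def OneReversePartiallyGreedy (S : SchauderBasisSys X) : Prop :=
  ∀ (x : X) (ρ : ℕ → ℕ) (m : ℕ) (A : Finset ℕ),
    S.IsGreedyOrdering x ρ → A.card ≤ m →
    (∀ i ∈ A, ∀ j ∈ Lam ρ m, j < i) →
    ‖x - S.G x ρ m‖ ≤ ‖x - S.P A x‖

/-- Deleting a coefficient that dominates those of `x`, or moving it to the right with either sign,
does not increase the norm. Bounding each `|f i x|` by `|t|` encodes `sup_i |e_i^*(x)| ≤ |t|`. -/
def RightShiftDominated (S : SchauderBasisSys X) : Prop :=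
  ∀ (x : X) (j k : ℕ), k < j → S.f j x = 0 → S.f k x = 0 →
    ∀ s t : ℝ, |s| = |t| → (∀ i : ℕ, |S.f i x| ≤ |t|) →
    max ‖x‖ ‖x + s • S.e j‖ ≤ ‖x + t • S.e k‖

/-- The vector obtained from `x` by replacing its `k`-th coordinate with `0`. -/
def eraseCoord (S : SchauderBasisSys X) (k : ℕ) (x : X) : X :=
  x - S.f k x • S.e k

/-- Erasing a largest coordinate is at least as good as erasing a coordinate further to the right.
This is the common reformulation of the two sides of the theorem. -/
def ErasureDominated (S : SchauderBasisSys X) : Prop :=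
  ∀ (x : X) (j k : ℕ), k < j → (∀ i, |S.f i x| ≤ |S.f k x|) →
    ‖S.eraseCoord k x‖ ≤ ‖S.eraseCoord j x‖

section Coordinates

variable (S)

theorem f_smul_e (n k : ℕ) (t : ℝ) : S.f n (t • S.e k) = if n = k then t else 0 := by
  simp [S.biorth]

theorem f_P (n : ℕ) (A : Finset ℕ) (x : X) :
    S.f n (S.P A x) = if n ∈ A then S.f n x else 0 := by
  simp [P, S.biorth]

theorem abs_f_P_le (n : ℕ) (A : Finset ℕ) (x : X) : |S.f n (S.P A x)| ≤ |S.f n x| := by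
  rw [f_P]
  split_ifs <;> simp

theorem abs_f_sub_P_le (n : ℕ) (A : Finset ℕ) (x : X) : |S.f n (x - S.P A x)| ≤ |S.f n x| := by
  rw [map_sub, f_P]
  split_ifs <;> simp

theorem f_eraseCoord (n k : ℕ) (x : X) :
    S.f n (S.eraseCoord k x) = if n = k then 0 else S.f n x := by
  rw [eraseCoord, map_sub, f_smul_e]
  split_ifs with hnk <;> simp [hnk]

theorem abs_f_eraseCoord_le (n k : ℕ) (x : X) : |S.f n (S.eraseCoord k x)| ≤ |S.f n x| := by
  rw [f_eraseCoord]
  split_ifs <;> simp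

theorem eraseCoord_add_smul (k : ℕ) (x : X) : S.eraseCoord k x + S.f k x • S.e k = x :=
  sub_add_cancel _ _

variable {S}

theorem eraseCoord_eq_self (hk : S.f k x = 0) : S.eraseCoord k x = x := by
  simp [eraseCoord, hk]

theorem eraseCoord_add_smul_e (hk : S.f k x = 0) (t : ℝ) :
    S.eraseCoord k (x + t • S.e k) = x := by
  simp [eraseCoord, S.biorth, hk]

theorem eraseCoord_comm (hjk : j ≠ k) (x : X) :
    S.eraseCoord j (S.eraseCoord k x) = S.eraseCoord k (S.eraseCoord j x) := by
  simpa [eraseCoord, S.biorth, hjk, hjk.symm] using sub_right_comm _ _ _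

theorem eraseCoord_sub_P_of_notMem {A : Finset ℕ} (hk : k ∉ A) (x : X) :
    S.eraseCoord k (x - S.P A x) = S.eraseCoord k x - S.P A (S.eraseCoord k x) := by
  have hP : S.P A (S.eraseCoord k x) = S.P A x := Finset.sum_congr rfl fun i hi => by
    rw [f_eraseCoord, if_neg (ne_of_mem_of_not_mem hi hk)]
  rw [hP, eraseCoord, map_sub, f_P, if_neg hk, sub_zero]
  exact sub_right_comm _ _ _

theorem eraseCoord_sub_P_erase {A : Finset ℕ} (hj : j ∈ A) (x : X) :
    S.eraseCoord j (x - S.P (A.erase j) x) = x - S.P A x := by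
  have hP : S.P A x = S.P (A.erase j) x + S.f j x • S.e j := (Finset.sum_erase_add A _ hj).symm
  rw [hP, eraseCoord, map_sub, f_P, if_neg (Finset.notMem_erase j A), sub_zero, sub_sub]

theorem continuous_eraseCoord (S : SchauderBasisSys X) (k : ℕ) : Continuous (S.eraseCoord k) := by
  unfold eraseCoord
  fun_prop

theorem norm_eraseCoord_le_of_eventually_P_range {g : X → X} (hg : Continuous g)
    (h : ∀ᶠ N in atTop, ‖S.eraseCoord k (S.P (Finset.range N) x)‖ ≤ ‖g (S.P (Finset.range N) x)‖) :
    ‖S.eraseCoord k x‖ ≤ ‖g x‖ :=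
  le_of_tendsto_of_tendsto (((S.continuous_eraseCoord k).tendsto x).comp (S.expansion x)).norm
    ((hg.tendsto x).comp (S.expansion x)).norm h

theorem abs_f_P_range_le (hk : ∀ i, |S.f i x| ≤ |S.f k x|) {N : ℕ} (hN : k < N) (i : ℕ) :
    |S.f i (S.P (Finset.range N) x)| ≤ |S.f k (S.P (Finset.range N) x)| := by
  rw [S.f_P k, if_pos (Finset.mem_range.mpr hN)]
  exact (S.abs_f_P_le i _ x).trans (hk i)

end Coordinates

section GreedyOrderings

theorem exists_isGreedyOrdering_zero_eq (hx : ∀ᶠ i in atTop, S.f i x = 0)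
    (hk : ∀ i, |S.f i x| ≤ |S.f k x|) : ∃ ρ : ℕ → ℕ, S.IsGreedyOrdering x ρ ∧ ρ 0 = k := by
  obtain ⟨τ, hτ⟩ := exists_perm_antitone_comp (a := fun i => |S.f i x|) <| by
    filter_upwards [hx] with i hi j
    simp [hi]
  obtain ⟨ρ, hρ_zero, hρ⟩ := exists_perm_antitone_comp_bot_eq hτ hk
  exact ⟨ρ, ⟨ρ.injective, fun n _ => ρ.surjective n, fun _ _ hij => hρ hij⟩, hρ_zero⟩

theorem IsGreedyOrdering.abs_f_le (hρ : S.IsGreedyOrdering x ρ) (n : ℕ) :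
    |S.f n x| ≤ |S.f (ρ 0) x| := by
  by_cases hn : S.f n x = 0
  · simp [hn]
  · obtain ⟨l, rfl⟩ := hρ.2.1 n hn
    exact hρ.2.2 0 l l.zero_le

theorem f_succ_eraseCoord_zero (hρ : ρ.Injective) (x : X) (i : ℕ) :
    S.f (ρ (i + 1)) (S.eraseCoord (ρ 0) x) = S.f (ρ (i + 1)) x := by
  rw [f_eraseCoord, if_neg (hρ.ne i.succ_ne_zero)]

theorem IsGreedyOrdering.tail (hρ : S.IsGreedyOrdering x ρ) :
    S.IsGreedyOrdering (S.eraseCoord (ρ 0) x) (fun i => ρ (i + 1)) := by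
  obtain ⟨hinj, hrange, hanti⟩ := hρ
  refine ⟨hinj.comp (add_left_injective 1), fun n hn => ?_, fun i l hil => ?_⟩
  · rw [f_eraseCoord, ite_ne_left_iff] at hn
    obtain ⟨_ | l, rfl⟩ := hrange n hn.2.symm
    · exact absurd rfl hn.1
    · exact ⟨l, rfl⟩
  · simpa only [f_succ_eraseCoord_zero hinj] using hanti _ _ (Nat.succ_le_succ hil)

theorem sub_G_succ (hρ : ρ.Injective) (x : X) (m : ℕ) :
    x - S.G x ρ (m + 1) =
      S.eraseCoord (ρ 0) x - S.G (S.eraseCoord (ρ 0) x) (fun i => ρ (i + 1)) m := by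
  simp only [G, f_succ_eraseCoord_zero hρ]
  rw [Finset.sum_range_succ', eraseCoord, add_comm, sub_sub]

end GreedyOrderings

theorem OneReversePartiallyGreedy.norm_eraseCoord_le (h : S.OneReversePartiallyGreedy)
    (hx : ∀ᶠ i in atTop, S.f i x = 0) (hkj : k < j) (hk : ∀ i, |S.f i x| ≤ |S.f k x|) :
    ‖S.eraseCoord k x‖ ≤ ‖S.eraseCoord j x‖ := by
  obtain ⟨ρ, hρ, rfl⟩ := exists_isGreedyOrdering_zero_eq hx hk
  simpa [G, P, eraseCoord] using h x ρ 1 {j} hρ (by simp) (by simpa [Lam] using hkj)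

theorem OneReversePartiallyGreedy.erasureDominated (h : S.OneReversePartiallyGreedy) :
    S.ErasureDominated := by
  intro x j k hkj hk
  refine norm_eraseCoord_le_of_eventually_P_range (S.continuous_eraseCoord j) ?_
  filter_upwards [eventually_gt_atTop k] with N hN
  refine h.norm_eraseCoord_le ?_ hkj (abs_f_P_range_le hk hN)
  filter_upwards [eventually_ge_atTop N] with i hi
  simp [f_P, hi.not_gt]

theorem ErasureDominated.norm_eraseCoord_le (h : S.ErasureDominated)
    (hk : ∀ i, |S.f i x| ≤ |S.f k x|) : ‖S.eraseCoord k x‖ ≤ ‖x‖ := by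
  refine norm_eraseCoord_le_of_eventually_P_range continuous_id ?_
  filter_upwards [eventually_gt_atTop k] with N hN
  refine (h _ N k hN (abs_f_P_range_le hk hN)).trans_eq ?_
  rw [eraseCoord_eq_self (by simp [f_P]), id]

theorem ErasureDominated.norm_eraseCoord_sub_P_erase_le (h : S.ErasureDominated) {A : Finset ℕ}
    (hj : j ∈ A) (hkA : ∀ i ∈ A, k < i) (hk : ∀ i, |S.f i x| ≤ |S.f k x|) :
    ‖S.eraseCoord k x - S.P (A.erase j) (S.eraseCoord k x)‖ ≤ ‖x - S.P A x‖ := by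
  have hkA' : k ∉ A.erase j := fun hmem => (hkA k (Finset.mem_of_mem_erase hmem)).false
  rw [← eraseCoord_sub_P_of_notMem hkA', ← eraseCoord_sub_P_erase hj]
  refine h _ j k (hkA j hj) fun i => ?_
  rw [map_sub (S.f k), S.f_P k, if_neg hkA', sub_zero]
  exact (S.abs_f_sub_P_le i _ x).trans (hk i)

theorem ErasureDominated.oneReversePartiallyGreedy (h : S.ErasureDominated) :
    S.OneReversePartiallyGreedy := by
  intro x ρ m A hρ hA hΛA
  simp only [Lam, Finset.forall_mem_image, Finset.mem_range] at hΛA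
  induction m generalizing x ρ A with
  | zero => simp [G, P, Finset.card_eq_zero.mp (Nat.le_zero.mp hA)]
  | succ m ih =>
    rw [sub_G_succ hρ.1]
    rcases A.eq_empty_or_nonempty with rfl | ⟨j, hj⟩
    · refine (ih _ _ ∅ hρ.tail (by simp) (by simp)).trans ?_
      simpa [P] using h.norm_eraseCoord_le hρ.abs_f_le
    · refine (ih _ _ (A.erase j) hρ.tail ?_ fun i hi l hl => ?_).trans
        (h.norm_eraseCoord_sub_P_erase_le hj (fun i hi => hΛA i hi m.succ_pos) hρ.abs_f_le)
      · rw [Finset.card_erase_of_mem hj]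
        exact Nat.sub_le_of_le_add hA
      · exact hΛA i (Finset.mem_of_mem_erase hi) (Nat.succ_lt_succ hl)

theorem oneReversePartiallyGreedy_iff_erasureDominated :
    S.OneReversePartiallyGreedy ↔ S.ErasureDominated :=
  ⟨OneReversePartiallyGreedy.erasureDominated, ErasureDominated.oneReversePartiallyGreedy⟩

theorem ErasureDominated.norm_add_smul_le (h : S.ErasureDominated) (hkj : k < j)
    (hj : S.f j x = 0) (hk : S.f k x = 0) (hst : |s| ≤ |t|) (ht : ∀ i, |S.f i x| ≤ |t|) :
    ‖x + s • S.e j‖ ≤ ‖x + t • S.e k‖ := by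
  have hf (i : ℕ) : S.f i (x + s • S.e j + t • S.e k) =
      if i = k then t else if i = j then s else S.f i x := by
    rw [map_add, map_add, f_smul_e, f_smul_e]
    grind
  have hmax (i : ℕ) :
      |S.f i (x + s • S.e j + t • S.e k)| ≤ |S.f k (x + s • S.e j + t • S.e k)| := by
    rw [hf, hf]
    grind
  have hle := h _ j k hkj hmax
  rwa [eraseCoord_add_smul_e (by simp [S.biorth, hk, hkj.ne]), add_right_comm,
    eraseCoord_add_smul_e (by simp [S.biorth, hj, hkj.ne'])] at hle

theorem ErasureDominated.rightShiftDominated (h : S.ErasureDominated) :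
    S.RightShiftDominated := fun _ _ _ hkj hj hk _ _ hst ht =>
  max_le (by simpa using h.norm_add_smul_le (s := 0) hkj hj hk (by simp) ht)
    (h.norm_add_smul_le hkj hj hk hst.le ht)

theorem RightShiftDominated.norm_add_smul_le (h : S.RightShiftDominated) (hkj : k < j)
    (hj : S.f j x = 0) (hk : S.f k x = 0) (hst : |s| ≤ |t|) (ht : ∀ i, |S.f i x| ≤ |t|) :
    ‖x + s • S.e j‖ ≤ ‖x + t • S.e k‖ := by
  have norm_le_of_abs_eq {r : ℝ} (hr : |r| = |t|) : ‖x + r • S.e j‖ ≤ ‖x + t • S.e k‖ :=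
    (le_max_right _ _).trans (h x j k hkj hj hk r t hr ht)
  exact (norm_add_smul_le_max_of_abs_le x (S.e j) hst).trans
    (max_le (norm_le_of_abs_eq (by simp)) (norm_le_of_abs_eq (abs_abs t)))

theorem RightShiftDominated.erasureDominated (h : S.RightShiftDominated) :
    S.ErasureDominated := by
  intro x j k hkj hk
  set z := S.eraseCoord j (S.eraseCoord k x) with hz
  have hzj : z + S.f j x • S.e j = S.eraseCoord k x := by
    simpa [f_eraseCoord, hkj.ne'] using S.eraseCoord_add_smul j (S.eraseCoord k x)
  have hzk : z + S.f k x • S.e k = S.eraseCoord j x := by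
    simpa [hz, eraseCoord_comm hkj.ne', f_eraseCoord, hkj.ne] using
      S.eraseCoord_add_smul k (S.eraseCoord j x)
  rw [← hzj, ← hzk]
  exact h.norm_add_smul_le hkj (by simp [hz, f_eraseCoord]) (by simp [hz, f_eraseCoord]) (hk j)
    fun i => (S.abs_f_eraseCoord_le i j _).trans ((S.abs_f_eraseCoord_le i k x).trans (hk i))

theorem erasureDominated_iff_rightShiftDominated :
    S.ErasureDominated ↔ S.RightShiftDominated :=
  ⟨ErasureDominated.rightShiftDominated, RightShiftDominated.erasureDominated⟩

end SchauderBasisSys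

theorem stmt_13_general {X : Type*} [NormedAddCommGroup X] [NormedSpace ℝ X]
    (S : SchauderBasisSys X) : S.OneReversePartiallyGreedy ↔ S.RightShiftDominated :=
  oneReversePartiallyGreedy_iff_erasureDominated.trans erasureDominated_iff_rightShiftDominated

/-- A Schauder basis satisfies `‖x - G_m(x)‖ ≤ σ̃^R_m(x)` for all `x`,
`m` and greedy orderings (is `1`-reverse partially greedy) if and only if for every `x`,
all indices `j > k` outside the support of `x`, and all reals `s, t` with
`|s| = |t| ≥ sup_i |e_i^*(x)|`, one has `max(‖x‖, ‖x + s e_j‖) ≤ ‖x + t e_k‖`. -/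
theorem stmt_13 {X : Type*} [NormedAddCommGroup X] [NormedSpace ℝ X] [CompleteSpace X]
    (S : SchauderBasisSys X) :
    (∀ (x : X) (ρ : ℕ → ℕ) (m : ℕ) (A : Finset ℕ),
        S.IsGreedyOrdering x ρ → A.card ≤ m →
        (∀ i ∈ A, ∀ j ∈ Lam ρ m, j < i) →
        ‖x - S.G x ρ m‖ ≤ ‖x - S.P A x‖) ↔
      (∀ (x : X) (j k : ℕ), k < j → S.f j x = 0 → S.f k x = 0 →
        ∀ s t : ℝ, |s| = |t| → (∀ i : ℕ, |S.f i x| ≤ |t|) →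
        max ‖x‖ ‖x + s • S.e j‖ ≤ ‖x + t • S.e k‖) :=
  stmt_13_general S
end

section
/- Let X be a real Banach space with an almost greedy Schauder basis (e_n), and let φ(n) = sup{‖1_A‖ : A ⊂ ℕ finite, |A| ≤ n} be its fundamental function. Then there exists a constant C such that for every finite set A ⊂ ℕ and all real scalars (a_i)_{i∈A}, one has φ(|A|)·min_{i∈A}|a_i| ≤ C‖Σ_{i∈A} a_i e_i‖. -/
open Filter Topology

open SchauderBasisSys

/-- The fundamental function `φ(n) = sup{‖1_A‖ : A ⊆ ℕ finite, |A| ≤ n}` of a basis. -/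
noncomputable def fundFun {X : Type*} [NormedAddCommGroup X] [NormedSpace ℝ X]
    (S : SchauderBasisSys X) (n : ℕ) : ℝ :=
  sSup {r : ℝ | ∃ A : Finset ℕ, A.card ≤ n ∧ r = ‖S.ind A‖}

/-!
Let `x = ∑_{i ∈ A} a_i e_i + ∑_{j ∈ B} b_j e_j` with `A`, `B` disjoint, `|B| ≤ |A|` and
`|b_j| ≤ |a_i|` for all `i ∈ A`, `j ∈ B`. Then `∑_{i ∈ A} a_i e_i` is a greedy approximation of
`x`, and comparing it with `P_B x` in the almost greedy inequality gives
`‖∑_{j ∈ B} b_j e_j‖ ≤ C ‖∑_{i ∈ A} a_i e_i‖`. If `A` and `B` overlap, pass through a set `D` of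
`|A|` indices disjoint from both, with constant coefficients `min |a_i|`; this costs one more
factor `C`. Taking `b_j = min |a_i|` and the supremum over `B` finishes the proof.
-/

theorem image_range_card_eq_of_isLowerSet {α : Type*} [DecidableEq α] (ρ : ℕ ≃ α) {A : Finset α}
    (hA : IsLowerSet (ρ ⁻¹' (A : Set α))) : (Finset.range A.card).image ρ = A := by
  have hne : ρ ⁻¹' (A : Set α) ≠ Set.univ := fun h ↦
    Set.infinite_univ (h ▸ A.finite_toSet.preimage ρ.injective.injOn)
  obtain ⟨n, hn⟩ := hA.eq_univ_or_Iio.resolve_left hne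
  have hAn : (Finset.range n).image ρ = A := by
    rw [← Finset.coe_inj, Finset.coe_image, Finset.coe_range, ← hn, ρ.image_preimage]
  have hcard : A.card = n := by
    rw [← hAn, Finset.card_image_of_injective _ ρ.injective, Finset.card_range]
  rw [hcard, hAn]

theorem exists_perm_monotone {β : Type*} [LinearOrder β] {κ : ℕ → β}
    (hκ : ∀ᶠ n in cofinite, ∀ i, κ i ≤ κ n) : ∃ ρ : Equiv.Perm ℕ, Monotone (κ ∘ ρ) := by
  rw [Nat.cofinite_eq_atTop] at hκ
  obtain ⟨N, hN⟩ := eventually_atTop.1 hκ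
  let σ : Equiv.Perm (Fin N) := Tuple.sort fun i ↦ κ i
  let ρ : Equiv.Perm ℕ := σ.extendDomain Fin.equivSubtype
  have hρ (k : Fin N) : ρ k = σ k := σ.extendDomain_apply_image Fin.equivSubtype k
  refine ⟨ρ, fun j k hjk ↦ ?_⟩
  obtain hk | hk := lt_or_ge k N
  · have hσ : κ (σ ⟨j, hjk.trans_lt hk⟩) ≤ κ (σ ⟨k, hk⟩) :=
      Tuple.monotone_sort (fun i : Fin N ↦ κ i) hjk
    rwa [← hρ, ← hρ] at hσ
  · have hρk : ρ k = k := σ.extendDomain_apply_not_subtype Fin.equivSubtype hk.not_gt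
    simpa only [Function.comp_apply, hρk] using hN k hk (ρ j)

theorem exists_perm_antitone_image_range_card_eq {α : Type*} [LinearOrder α] {v : ℕ → α}
    (hv : ∀ᶠ n in cofinite, ∀ i, v n ≤ v i) {A : Finset ℕ}
    (hA : ∀ i ∈ A, ∀ j ∉ A, v j ≤ v i) :
    ∃ ρ : Equiv.Perm ℕ, Antitone (v ∘ ρ) ∧ (Finset.range A.card).image ρ = A := by
  -- Sort by decreasing `v`, putting the elements of `A` first among ties.
  let κ : ℕ → αᵒᵈ ×ₗ Bool := fun n ↦ toLex (OrderDual.toDual (v n), decide (n ∉ A))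
  have hκ_le {m n : ℕ} : κ m ≤ κ n ↔ v n ≤ v m ∧ (v m = v n → n ∈ A → m ∈ A) := by
    simp [κ, Prod.Lex.toLex_le_toLex', Bool.le_iff_imp, not_imp_not]
  have hκ : ∀ᶠ n in cofinite, ∀ i, κ i ≤ κ n := by
    filter_upwards [hv, A.eventually_cofinite_notMem] with n hn hnA i
    exact hκ_le.2 ⟨hn i, fun _ h ↦ absurd h hnA⟩
  obtain ⟨ρ, hρ⟩ := exists_perm_monotone hκ
  refine ⟨ρ, fun j k hjk ↦ (hκ_le.1 (hρ hjk)).1,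
    image_range_card_eq_of_isLowerSet ρ fun k j hjk hk ↦ ?_⟩
  by_contra hj
  obtain ⟨hvkj, htie⟩ := hκ_le.1 (hρ hjk)
  exact hj (htie ((hA _ hk _ hj).antisymm hvkj) hk)

namespace SchauderBasisSys

variable {X : Type*} [NormedAddCommGroup X] [NormedSpace ℝ X]

theorem e_ne_zero (S : SchauderBasisSys X) (n : ℕ) : S.e n ≠ 0 := fun h ↦ by
  simpa [h] using S.biorth n n

theorem f_sum_smul (S : SchauderBasisSys X) (A : Finset ℕ) (a : ℕ → ℝ) (n : ℕ) :
    S.f n (∑ i ∈ A, a i • S.e i) = if n ∈ A then a n else 0 := by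
  simp [S.biorth]

theorem P_add (S : SchauderBasisSys X) (A : Finset ℕ) (x y : X) :
    S.P A (x + y) = S.P A x + S.P A y := by
  simp [P, add_smul, Finset.sum_add_distrib]

theorem P_sum_smul (S : SchauderBasisSys X) (A B : Finset ℕ) (b : ℕ → ℝ) :
    S.P A (∑ i ∈ B, b i • S.e i) = ∑ i ∈ A ∩ B, b i • S.e i := by
  simp only [P, f_sum_smul, ite_smul, zero_smul, Finset.sum_ite_mem]

theorem G_eq_P_Lam (S : SchauderBasisSys X) (x : X) {ρ : ℕ → ℕ} (hρ : Function.Injective ρ)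
    (m : ℕ) : S.G x ρ m = S.P (Lam ρ m) x := by
  rw [G, P, Lam, Finset.sum_image hρ.injOn]

/-- A greedy set of `x`: no coordinate of `x` outside `A` exceeds a coordinate inside `A` in
absolute value. For finitely supported `x` these are exactly the sets `Λ_m(x)` arising from
greedy orderings. -/
def IsGreedySet (S : SchauderBasisSys X) (x : X) (A : Finset ℕ) : Prop :=
  ∀ i ∈ A, ∀ j ∉ A, |S.f j x| ≤ |S.f i x|

theorem IsGreedySet.exists_isGreedyOrdering {S : SchauderBasisSys X} {x : X} {A : Finset ℕ}
    (hA : S.IsGreedySet x A) (hx : ∀ᶠ n in cofinite, S.f n x = 0) :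
    ∃ ρ : ℕ → ℕ, S.IsGreedyOrdering x ρ ∧ Lam ρ A.card = A := by
  have hmin : ∀ᶠ n in cofinite, ∀ i, |S.f n x| ≤ |S.f i x| :=
    hx.mono fun n hn i ↦ by simp [hn]
  obtain ⟨ρ, hanti, hρA⟩ := exists_perm_antitone_image_range_card_eq hmin hA
  exact ⟨ρ, ⟨ρ.injective, fun n _ ↦ ρ.surjective n, fun _ _ hjk ↦ hanti hjk⟩, hρA⟩

/-- The almost greedy inequality with the explicit constant `C`; `AlmostGreedy` only asserts that
such a constant exists. -/
def AlmostGreedyWith (S : SchauderBasisSys X) (C : ℝ) : Prop :=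
  ∀ (x : X) (ρ : ℕ → ℕ) (m : ℕ) (A : Finset ℕ), S.IsGreedyOrdering x ρ →
    A.card ≤ m → ‖x - S.G x ρ m‖ ≤ C * ‖x - S.P A x‖

namespace AlmostGreedyWith

variable {S : SchauderBasisSys X} {C : ℝ}

theorem norm_sub_P_le (hS : S.AlmostGreedyWith C) {x : X} (hx : ∀ᶠ n in cofinite, S.f n x = 0)
    {A B : Finset ℕ} (hA : S.IsGreedySet x A) (hcard : B.card ≤ A.card) :
    ‖x - S.P A x‖ ≤ C * ‖x - S.P B x‖ := by
  obtain ⟨ρ, hρ, hLam⟩ := hA.exists_isGreedyOrdering hx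
  simpa only [S.G_eq_P_Lam x hρ.1, hLam] using hS x ρ A.card B hρ hcard

theorem norm_sum_smul_le_of_disjoint (hS : S.AlmostGreedyWith C) {A B : Finset ℕ}
    (hAB : Disjoint A B) (hcard : B.card ≤ A.card) {a b : ℕ → ℝ}
    (hba : ∀ i ∈ A, ∀ j ∈ B, |b j| ≤ |a i|) :
    ‖∑ j ∈ B, b j • S.e j‖ ≤ C * ‖∑ i ∈ A, a i • S.e i‖ := by
  set u := ∑ i ∈ A, a i • S.e i with hu
  set v := ∑ j ∈ B, b j • S.e j with hv
  have hf (n : ℕ) : S.f n (u + v) = (if n ∈ A then a n else 0) + if n ∈ B then b n else 0 := by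
    rw [map_add, f_sum_smul, f_sum_smul]
  have hfin : ∀ᶠ n in cofinite, S.f n (u + v) = 0 := by
    filter_upwards [A.eventually_cofinite_notMem, B.eventually_cofinite_notMem] with n hnA hnB
    simp [hf, hnA, hnB]
  have hgreedy : S.IsGreedySet (u + v) A := by
    intro i hi j hj
    have hiB : i ∉ B := Finset.disjoint_left.1 hAB hi
    by_cases hjB : j ∈ B
    · simpa [hf, hi, hiB, hj, hjB] using hba i hi j hjB
    · simp [hf, hj, hjB]
  have hPA : S.P A (u + v) = u := by
    simp [hu, hv, P_add, P_sum_smul, Finset.disjoint_iff_inter_eq_empty.1 hAB]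
  have hPB : S.P B (u + v) = v := by
    simp [hu, hv, P_add, P_sum_smul, Finset.disjoint_iff_inter_eq_empty.1 hAB.symm]
  simpa only [hPA, hPB, add_sub_cancel_left, add_sub_cancel_right] using
    hS.norm_sub_P_le hfin hgreedy hcard

theorem nonneg (hS : S.AlmostGreedyWith C) : 0 ≤ C := by
  have h : 0 ≤ C * ‖S.e 0‖ := by
    simpa using hS.norm_sum_smul_le_of_disjoint (A := {0}) (B := ∅) (a := 1) (b := 1)
      (Finset.disjoint_empty_right _) (by simp) (by simp)
  exact nonneg_of_mul_nonneg_left h (norm_pos_iff.2 (S.e_ne_zero 0))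

theorem norm_sum_smul_le (hS : S.AlmostGreedyWith C) {A B : Finset ℕ}
    (hcard : B.card ≤ A.card) {a b : ℕ → ℝ} (hba : ∀ i ∈ A, ∀ j ∈ B, |b j| ≤ |a i|) :
    ‖∑ j ∈ B, b j • S.e j‖ ≤ C ^ 2 * ‖∑ i ∈ A, a i • S.e i‖ := by
  obtain rfl | hA := A.eq_empty_or_nonempty
  · obtain rfl : B = ∅ := by simpa using hcard
    simp
  obtain ⟨i₀, hi₀, hmin⟩ := A.exists_min_image (fun i ↦ |a i|) hA
  obtain ⟨D, hD, hDcard⟩ := (A ∪ B).finite_toSet.infinite_compl.exists_subset_card_eq A.card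
  have hDdisj : Disjoint (A ∪ B) D :=
    Finset.disjoint_right.2 fun i hi ↦ by simpa using hD hi
  obtain ⟨hAD, hBD⟩ := Finset.disjoint_union_left.1 hDdisj
  calc ‖∑ j ∈ B, b j • S.e j‖
      ≤ C * ‖∑ k ∈ D, a i₀ • S.e k‖ :=
        hS.norm_sum_smul_le_of_disjoint hBD.symm (hcard.trans_eq hDcard.symm)
          fun _ _ ↦ hba i₀ hi₀
    _ ≤ C * (C * ‖∑ i ∈ A, a i • S.e i‖) := by
        refine mul_le_mul_of_nonneg_left ?_ hS.nonneg
        exact hS.norm_sum_smul_le_of_disjoint hAD hDcard.le fun i hi _ _ ↦ hmin i hi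
    _ = C ^ 2 * ‖∑ i ∈ A, a i • S.e i‖ := by ring

end AlmostGreedyWith

theorem fundFun_mul_le (S : SchauderBasisSys X) {n : ℕ} {t r : ℝ} (ht : 0 ≤ t)
    (h : ∀ B : Finset ℕ, B.card ≤ n → ‖S.ind B‖ * t ≤ r) : fundFun S n * t ≤ r := by
  obtain rfl | ht := ht.eq_or_lt
  · simpa using h ∅
  · rw [← le_div_iff₀ ht]
    refine csSup_le ⟨_, ∅, by simp, rfl⟩ ?_
    rintro _ ⟨B, hB, rfl⟩
    exact (le_div_iff₀ ht).2 (h B hB)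

end SchauderBasisSys

theorem stmt_16_general {X : Type*} [NormedAddCommGroup X] [NormedSpace ℝ X]
    (S : SchauderBasisSys X) (hAG : S.AlmostGreedy) :
    ∃ C : ℝ, ∀ (A : Finset ℕ) (hA : A.Nonempty) (a : ℕ → ℝ),
      fundFun S A.card * A.inf' hA (fun i => |a i|) ≤ C * ‖∑ i ∈ A, a i • S.e i‖ := by
  obtain ⟨C, hC : S.AlmostGreedyWith C⟩ := hAG
  refine ⟨C ^ 2, fun A hA a ↦ ?_⟩
  obtain ⟨i₀, -, hmin⟩ := A.exists_mem_eq_inf' hA fun i ↦ |a i|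
  have hle (i : ℕ) (hi : i ∈ A) : |a i₀| ≤ |a i| := hmin ▸ Finset.inf'_le _ hi
  rw [hmin]
  refine S.fundFun_mul_le (abs_nonneg _) fun B hB ↦ ?_
  calc ‖S.ind B‖ * |a i₀| = ‖∑ j ∈ B, a i₀ • S.e j‖ := by
        rw [← Finset.smul_sum, norm_smul, Real.norm_eq_abs, mul_comm, ind]
    _ ≤ C ^ 2 * ‖∑ i ∈ A, a i • S.e i‖ := hC.norm_sum_smul_le hB fun i hi _ _ ↦ hle i hi

/-- If a Schauder basis of a real Banach space is almost greedy, then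
there is a constant `C` such that `φ(|A|) · min_{i ∈ A} |a_i| ≤ C ‖∑_{i ∈ A} a_i e_i‖`
for every nonempty finite set `A` and all real scalars `(a_i)`. -/
theorem stmt_16 {X : Type*} [NormedAddCommGroup X] [NormedSpace ℝ X] [CompleteSpace X]
    (S : SchauderBasisSys X) (hAG : S.AlmostGreedy) :
    ∃ C : ℝ, ∀ (A : Finset ℕ) (hA : A.Nonempty) (a : ℕ → ℝ),
      fundFun S A.card * A.inf' hA (fun i => |a i|) ≤ C * ‖∑ i ∈ A, a i • S.e i‖ :=
  stmt_16_general S hAG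
end
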